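/- arXiv:2308.01642 — 2 statements merged into one kernel-verified Lean document; each statement's English description precedes it below -/
import Mathlib

section
/- Let H be a separable real Hilbert space and let μ be a Gaussian Borel probability measure on H which is nondegenerate, in the sense that for every nonzero continuous linear functional L : H → ℝ the variance of L under μ is strictly positive. Then every Borel-measurable set E ⊆ H with μ(E) = 1 is dense in H. -/
open MeasureTheory ProbabilityTheory
open scoped NNReal ENNReal

lemma exists_quasi_dir
    {H : Type*} [NormedAddCommGroup H] [InnerProductSpace ℝ H] [CompleteSpace H]
    [SecondCountableTopology H] [MeasurableSpace H] [BorelSpace H]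
    (μ : Measure H) [IsGaussian μ] (v : H) (hv : 0 < Var[fun x ↦ inner ℝ v x; μ]) :
    ∃ k : H, inner ℝ v k = 1 ∧ ∀ s : ℝ, μ.map (fun x ↦ x + s • k) ≪ μ := by
  have h2 : MemLp id 2 μ := IsGaussian.memLp_two_id
  set σ := Var[fun x ↦ inner ℝ v x; μ] with hσ
  let h : H := (InnerProductSpace.toDual ℝ H).symm (covarianceBilin μ v)
  have hh : ∀ w, inner ℝ h w = cov[fun u ↦ inner ℝ v u, fun u ↦ inner ℝ w u; μ] := by
    intro w
    rw [← covarianceBilin_apply_eq_cov h2]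
    exact InnerProductSpace.toDual_symm_apply
  have hself : cov[fun u ↦ inner ℝ v u, fun u ↦ inner ℝ v u; μ] = σ :=
    covariance_self (by fun_prop)
  let k : H := σ⁻¹ • h
  have hvk : inner ℝ v k = 1 := by
    rw [real_inner_smul_right, real_inner_comm, hh, hself, inv_mul_cancel₀ hv.ne']
  refine ⟨k, hvk, fun s ↦ ?_⟩
  let Lv : H →L[ℝ] ℝ := innerSL ℝ v
  let Y : H →L[ℝ] H := ContinuousLinearMap.id ℝ H - Lv.smulRight k
  have hY : ∀ x, Y x = x - inner ℝ v x • k := fun x ↦ by simp [Y, Lv]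
  have hLv : ∀ x, Lv x = inner ℝ v x := fun x ↦ by simp [Lv]
  have hmem : ∀ w : H, MemLp (fun u ↦ inner ℝ w u) 2 μ := fun w ↦ by
    simpa using (IsGaussian.memLp_dual μ (innerSL ℝ w) 2 (by simp))
  have hG : HasGaussianLaw (fun ω ↦ (Lv ω, Y ω)) μ :=
    (IsGaussian.hasGaussianLaw_id (μ := μ)).map_fun (Lv.prod Y)
  have hind : IndepFun Lv Y μ := by
    refine hG.indepFun_of_covariance_inner fun a w ↦ ?_
    have e1 : (fun ω ↦ inner ℝ a (Lv ω)) = fun ω ↦ a * inner ℝ v ω := by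
      ext ω; simp [hLv, mul_comm]
    have e2 : (fun ω ↦ inner ℝ w (Y ω)) = fun ω ↦ inner ℝ w ω - inner ℝ w k * inner ℝ v ω := by
      ext ω; rw [hY, inner_sub_right, real_inner_smul_right, mul_comm]
    rw [e1, e2, covariance_const_mul_left, covariance_fun_sub_right (hmem v) (hmem w)
      ((hmem v).const_mul _), covariance_const_mul_right, hself, ← hh, real_inner_smul_right,
      real_inner_comm]
    field_simp
    simp
  have hprod := (indepFun_iff_map_prod_eq_prod_map_map (by fun_prop) (by fun_prop)).1 hind
  have hmap : μ.map Lv = gaussianReal (μ[Lv]) σ.toNNReal := by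
    rw [IsGaussian.map_eq_gaussianReal]
    rfl
  have hσ0 : σ.toNNReal ≠ 0 := by simpa using hv
  have hac : (μ.map Lv).map (fun t ↦ t + s) ≪ μ.map Lv := by
    rw [hmap, gaussianReal_map_add_const]
    exact (gaussianReal_absolutelyContinuous _ hσ0).trans
      (gaussianReal_absolutelyContinuous' _ hσ0)
  have : IsProbabilityMeasure (μ.map Y) := Measure.isProbabilityMeasure_map (by fun_prop)
  have : IsProbabilityMeasure (μ.map Lv) := Measure.isProbabilityMeasure_map (by fun_prop)
  let Φ : ℝ × H → H := fun p ↦ p.1 • k + p.2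
  have hΦ : Measurable Φ := by fun_prop
  have hΦμ : ((μ.map Lv).prod (μ.map Y)).map Φ = μ := by
    rw [← hprod, Measure.map_map hΦ (by fun_prop)]
    convert Measure.map_id
    ext x
    simp [Φ, hY, hLv]
  have key := ((hac.prod (Measure.AbsolutelyContinuous.refl (μ.map Y))).map hΦ)
  rw [hΦμ] at key
  convert key using 1
  conv_rhs => rw [← Measure.map_id (μ := μ.map Y)]
  rw [Measure.map_prod_map _ _ (by fun_prop) (by fun_prop), Measure.map_map hΦ (by fun_prop)]
  conv_lhs => rw [← hΦμ]
  rw [Measure.map_map (by fun_prop) hΦ]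
  congr 1
  ext p
  simp [Φ, add_smul]
  abel

/-- **Itô's density lemma.** If `μ` is a nondegenerate Gaussian Borel probability measure on a
separable real Hilbert space `H` (every continuous linear functional pushes `μ` forward to a
Gaussian measure on `ℝ`, and the variance of every nonzero functional is strictly positive),
then every Borel set of full measure is dense in `H`. -/
theorem full_measure_set_dense_of_nondegenerate_gaussian
    {H : Type*} [NormedAddCommGroup H] [InnerProductSpace ℝ H] [CompleteSpace H]
    [SecondCountableTopology H] [MeasurableSpace H] [BorelSpace H]
    (μ : Measure H) [IsProbabilityMeasure μ]
    (hGauss : ∀ L : H →L[ℝ] ℝ, ∃ (m : ℝ) (v : ℝ≥0), μ.map L = gaussianReal m v)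
    (hnondeg : ∀ L : H →L[ℝ] ℝ, L ≠ 0 →
      0 < ∫ x, (L x - ∫ y, L y ∂μ) ^ 2 ∂μ)
    (E : Set H) (hE : MeasurableSet E) (hμE : μ E = 1) :
    Dense E := by
  have : IsGaussian μ := isGaussian_of_map_eq_gaussianReal hGauss
  have hdir : ∀ v : H, v ≠ 0 → ∃ k : H, inner ℝ v k = 1 ∧
      ∀ s : ℝ, μ.map (fun x ↦ x + s • k) ≪ μ := by
    intro v hv
    apply exists_quasi_dir μ v
    have h0 : innerSL ℝ v ≠ 0 := by
      intro h
      apply hv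
      have := congrArg (fun L : H →L[ℝ] ℝ ↦ L v) h
      simpa using this
    have := hnondeg _ h0
    rw [variance_eq_integral (by fun_prop)]
    simpa using this
  let D : Submodule ℝ H :=
    { carrier := {h | ∀ s : ℝ, μ.map (fun x ↦ x + s • h) ≪ μ}
      zero_mem' := by
        intro s
        simp only [smul_zero, add_zero]
        rw [Measure.map_id']
      add_mem' := by
        intro a b ha hb s
        have h1 := ((ha s).map (f := fun x ↦ x + s • b) (by fun_prop)).trans (hb s)
        rw [Measure.map_map (by fun_prop) (by fun_prop)] at h1
        convert h1 using 2
        ext x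
        simp [smul_add, add_assoc]
      smul_mem' := by
        intro c a ha s
        simp only [smul_smul]
        exact ha (s * c) }
  have hD : Dense (D : Set H) := by
    rw [Submodule.dense_iff_topologicalClosure_eq_top, Submodule.topologicalClosure_eq_top_iff,
      Submodule.eq_bot_iff]
    intro v hv
    by_contra hne
    obtain ⟨k, hk1, hk⟩ := hdir v hne
    have := (Submodule.mem_orthogonal' D v).1 hv k hk
    rw [hk1] at this
    exact one_ne_zero this
  rw [dense_iff_inter_open]
  intro U hU hUne
  by_contra hemp
  have hU0 : μ U = 0 := by
    have hc : μ Eᶜ = 0 := (prob_compl_eq_zero_iff hE).2 hμE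
    refine measure_mono_null (fun x hx hxE ↦ hemp ⟨x, hx, hxE⟩) hc
  have htr : ∀ h : D, μ ((fun x ↦ x + (h : H)) ⁻¹' U) = 0 := by
    intro h
    have := h.2 1 hU0
    rw [Measure.map_apply (by fun_prop) hU.measurableSet] at this
    simpa using this
  have hopen : ∀ h : D, IsOpen ((fun x ↦ x + (h : H)) ⁻¹' U) :=
    fun h ↦ hU.preimage (by fun_prop)
  obtain ⟨T, hT, hTU⟩ := TopologicalSpace.isOpen_iUnion_countable _ hopen
  have huniv : ⋃ h : D, ((fun x ↦ x + (h : H)) ⁻¹' U) = Set.univ := by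
    rw [Set.eq_univ_iff_forall]
    intro x
    obtain ⟨u, hu⟩ := hUne
    obtain ⟨d, hd, hdD⟩ := hD.inter_open_nonempty ((fun y ↦ x + y) ⁻¹' U)
      (hU.preimage (by fun_prop)) ⟨u - x, by simpa using hu⟩
    exact Set.mem_iUnion.2 ⟨⟨d, hdD⟩, hd⟩
  have h0 : μ Set.univ = 0 := by
    rw [← huniv, ← hTU]
    exact (measure_biUnion_null_iff hT).2 fun h _ ↦ htr h
  simp at h0
end

section
/- Let H be a separable real Hilbert space and let μ be a Gaussian Borel probability measure on H which is nondegenerate, in the sense that for every nonzero continuous linear functional L : H → ℝ the variance of L under μ is strictly positive. If u, v : H → ℝ are continuous functions with u(x) = v(x) for μ-almost every x ∈ H, then u(x) = v(x) for every x ∈ H. -/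
open MeasureTheory ProbabilityTheory
open scoped NNReal ENNReal

lemma aux_rot_mem
    {H : Type*} [NormedAddCommGroup H] [InnerProductSpace ℝ H] [CompleteSpace H]
    [SecondCountableTopology H] [MeasurableSpace H] [BorelSpace H]
    (ν : Measure H) [IsGaussian ν] (h0 : ν[id] = 0) (θ : ℝ) {x y : H}
    (hx : x ∈ ν.support) (hy : y ∈ ν.support) :
    Real.cos θ • x + Real.sin θ • y ∈ ν.support := by
  rw [Measure.mem_support_iff_forall] at hx hy ⊢
  intro U hU
  obtain ⟨V, hVU, hVo, hV⟩ := mem_nhds_iff.1 hU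
  refine lt_of_lt_of_le ?_ (measure_mono hVU)
  have hrot := IsGaussian.map_rotation_eq_self (μ := ν) h0 θ
  have h1 : ν V = (ν.prod ν) (V ×ˢ Set.univ) := by simp
  rw [h1, ← hrot, Measure.map_apply (by fun_prop)
    (hVo.measurableSet.prod MeasurableSet.univ)]
  have hc : Continuous fun p : H × H => Real.cos θ • p.1 + Real.sin θ • p.2 := by fun_prop
  have hn : (fun p : H × H => Real.cos θ • p.1 + Real.sin θ • p.2) ⁻¹' V ∈ nhds (x, y) :=
    hc.continuousAt.preimage_mem_nhds (hVo.mem_nhds hV)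
  rw [nhds_prod_eq, Filter.mem_prod_iff] at hn
  obtain ⟨A, hA, B, hB, hAB⟩ := hn
  refine lt_of_lt_of_le ?_ (measure_mono (s := A ×ˢ B) ?_)
  · rw [Measure.prod_prod]
    exact ENNReal.mul_pos (hx A hA).ne' (hy B hB).ne'
  · intro p hp
    have := hAB hp
    simpa [ContinuousLinearMap.rotation] using this

lemma aux_support_univ
    {H : Type*} [NormedAddCommGroup H] [InnerProductSpace ℝ H] [CompleteSpace H]
    [SecondCountableTopology H] [MeasurableSpace H] [BorelSpace H]
    (ν : Measure H) [IsGaussian ν] (h0 : ν[id] = 0)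
    (hnd : ∀ L : H →L[ℝ] ℝ, (∀ᵐ x ∂ν, L x = 0) → L = 0) :
    ν.support = Set.univ := by
  have hne : ν.support.Nonempty := Measure.nonempty_support (IsProbabilityMeasure.ne_zero ν)
  have hneg : ∀ x ∈ ν.support, -x ∈ ν.support := fun x hx => by
    simpa using aux_rot_mem ν h0 Real.pi hx hx
  have hz : (0 : H) ∈ ν.support := by
    obtain ⟨x, hx⟩ := hne
    simpa using aux_rot_mem ν h0 (Real.pi / 4) hx (hneg x hx)
  have hsmall : ∀ c : ℝ, |c| ≤ 1 → ∀ x ∈ ν.support, c • x ∈ ν.support := fun c hc x hx => by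
    have := aux_rot_mem ν h0 (Real.arccos c) hx hz
    rwa [Real.cos_arccos (abs_le.1 hc).1 (abs_le.1 hc).2, smul_zero, add_zero] at this
  have hdbl : ∀ x ∈ ν.support, (2 : ℝ) • x ∈ ν.support := fun x hx => by
    have h2 : ∀ x ∈ ν.support, √2 • x ∈ ν.support := fun x hx => by
      have := aux_rot_mem ν h0 (Real.pi / 4) hx hx
      rw [Real.cos_pi_div_four, Real.sin_pi_div_four, ← add_smul] at this
      simpa using this
    have := h2 _ (h2 x hx)
    rwa [smul_smul, Real.mul_self_sqrt (by norm_num)] at this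
  have hpow : ∀ n : ℕ, ∀ x ∈ ν.support, ((2 : ℝ) ^ n) • x ∈ ν.support := by
    intro n
    induction n with
    | zero => intro x hx; simpa using hx
    | succ k ih =>
      intro x hx
      rw [pow_succ, mul_smul]
      exact ih _ (hdbl x hx)
  have hsmul : ∀ c : ℝ, ∀ x ∈ ν.support, c • x ∈ ν.support := by
    intro c x hx
    obtain ⟨n, hn⟩ := pow_unbounded_of_one_lt |c| (by norm_num : (1 : ℝ) < 2)
    have hp : (0 : ℝ) < 2 ^ n := by positivity
    have := hpow n _ (hsmall (c / 2 ^ n)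
      (by rw [abs_div, abs_of_pos hp, div_le_one hp]; exact hn.le) x hx)
    rwa [smul_smul, mul_div_cancel₀ _ hp.ne'] at this
  have hadd : ∀ x ∈ ν.support, ∀ y ∈ ν.support, x + y ∈ ν.support := by
    intro x hx y hy
    have := hsmul (√2) _ (aux_rot_mem ν h0 (Real.pi / 4) hx hy)
    rw [Real.cos_pi_div_four, Real.sin_pi_div_four, ← smul_add, smul_smul] at this
    have h2 : √2 * (√2 / 2) = (1 : ℝ) := by
      rw [← mul_div_assoc, Real.mul_self_sqrt (by norm_num)]; norm_num
    rwa [h2, one_smul] at this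
  let K : Submodule ℝ H :=
    { carrier := ν.support
      add_mem' := fun {a b} ha hb => hadd a ha b hb
      zero_mem' := hz
      smul_mem' := fun c x hx => hsmul c x hx }
  have hK : K = ⊤ := by
    have hcl : IsClosed (K : Set H) := Measure.isClosed_support
    rw [← hcl.submodule_topologicalClosure_eq, Submodule.topologicalClosure_eq_top_iff,
      Submodule.eq_bot_iff]
    intro w hw
    have hL : innerSL ℝ w = 0 := by
      apply hnd
      filter_upwards [Measure.support_mem_ae (μ := ν)] with x hx
      rw [innerSL_apply_apply, real_inner_comm]
      exact (Submodule.mem_orthogonal K w).1 hw x hx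
    have := congrArg (fun f : H →L[ℝ] ℝ => f w) hL
    simpa using this
  exact congrArg (fun M : Submodule ℝ H => (M : Set H)) hK

/-- If `μ` is a nondegenerate Gaussian Borel probability measure on a separable real
Hilbert space and two continuous real functions agree `μ`-almost everywhere, then they
agree everywhere. -/
theorem continuous_eq_of_ae_eq_nondegenerate_gaussian
    {H : Type*} [NormedAddCommGroup H] [InnerProductSpace ℝ H] [CompleteSpace H]
    [SecondCountableTopology H] [MeasurableSpace H] [BorelSpace H]
    (μ : Measure H) [IsProbabilityMeasure μ]
    (hGauss : ∀ L : H →L[ℝ] ℝ, ∃ (m : ℝ) (v : ℝ≥0), μ.map L = gaussianReal m v)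
    (hnondeg : ∀ L : H →L[ℝ] ℝ, L ≠ 0 →
      0 < ∫ x, (L x - ∫ y, L y ∂μ) ^ 2 ∂μ)
    (u v : H → ℝ) (hu : Continuous u) (hv : Continuous v)
    (hae : ∀ᵐ x ∂μ, u x = v x) :
    ∀ x : H, u x = v x := by
  have hG : IsGaussian μ := isGaussian_of_map_eq_gaussianReal hGauss
  set m : H := ∫ x, x ∂μ with hm
  let ν : Measure H := μ.map (fun x => x - m)
  have hνG : IsGaussian ν := inferInstanceAs (IsGaussian (μ.map (fun x => x - m)))
  have hmeas : Measurable (fun x : H => x - m) := by fun_prop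
  have h0 : ν[id] = 0 := by
    change ∫ x, id x ∂(μ.map (fun x => x - m)) = 0
    rw [integral_map hmeas.aemeasurable (by fun_prop)]
    simp only [id]
    rw [integral_sub (f := fun x : H => x) IsGaussian.integrable_id (integrable_const _)]
    simp [hm]
  have hsupp : ν.support = Set.univ := by
    apply aux_support_univ ν h0
    intro L hL
    by_contra hne
    have hL2 : ∀ᵐ x ∂μ, L (x - m) = 0 := ae_of_ae_map hmeas.aemeasurable hL
    have h3 := hnondeg L hne
    have h4 : ∫ x, (L x - ∫ y, L y ∂μ) ^ 2 ∂μ = 0 := by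
      apply integral_eq_zero_of_ae
      filter_upwards [hL2] with x hx
      rw [IsGaussian.integral_dual, ← map_sub]
      simp [← hm, hx]
    exact h3.ne' h4
  intro x
  by_contra hx
  have hopen : IsOpen {z : H | u (z + m) ≠ v (z + m)} :=
    isOpen_ne_fun (by fun_prop) (by fun_prop)
  have hxs : x - m ∈ ν.support := by rw [hsupp]; trivial
  have hpos := (Measure.mem_support_iff_forall _).1 hxs _
    (hopen.mem_nhds (by simpa using hx))
  rw [Measure.map_apply hmeas hopen.measurableSet] at hpos
  have : μ {x | ¬ (u x = v x)} = 0 := hae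
  simp [this] at hpos
end
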